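/- The minimum size of a set S ⊆ E that strongly connects G equals the number of necessary edges of G plus the minimum size of a set R of redundant edges such that every unsatisfied edge of G is provided a cycle by some edge of R. -/

import Mathlib

/-- A set `S` of directed edges strongly connects the vertex set `V`:
for every pair of vertices there is a directed path using only edges of `S`. -/
def StronglyConnects {V : Type*} (S : Set (V × V)) : Prop :=
  ∀ u v : V, Relation.ReflTransGen (fun a b => (a, b) ∈ S) u v

/-- The edges of the closed walk determined by the vertex list `c`
(consecutive pairs, wrapping around from the last vertex to the first). -/
def cycleEdges {V : Type*} (c : List V) : List (V × V) := c.zip (c.rotate 1)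

/-- `c` is a directed cycle of the graph with edge set `E`: a nonempty list of
distinct vertices all of whose consecutive (wrap-around) pairs are edges.
Its length (number of edges) is `c.length`. -/
def IsCycle {V : Type*} (E : Set (V × V)) (c : List V) : Prop :=
  c ≠ [] ∧ c.Nodup ∧ ∀ e ∈ cycleEdges c, e ∈ E

/-- An edge is redundant if deleting it leaves a strongly connected graph. -/
def Redundant {V : Type*} (E : Set (V × V)) (e : V × V) : Prop :=
  e ∈ E ∧ StronglyConnects (E \ {e})

/-- An edge is necessary if deleting it destroys strong connectivity. -/
def Necessary {V : Type*} (E : Set (V × V)) (e : V × V) : Prop :=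
  e ∈ E ∧ ¬ StronglyConnects (E \ {e})

/-- The set of necessary edges. -/
def necessarySet {V : Type*} (E : Set (V × V)) : Set (V × V) :=
  {e | Necessary E e}

/-- An edge `(u, v)` is unsatisfied if there is no directed path from `v`
back to `u` consisting only of necessary edges. -/
def Unsatisfied {V : Type*} (E : Set (V × V)) (e : V × V) : Prop :=
  e ∈ E ∧ ¬ Relation.ReflTransGen (fun a b => Necessary E (a, b)) e.2 e.1

/-- A redundant edge `r` provides a cycle for an unsatisfied edge `(u, v)` if
there is a directed path from `v` to `u` consisting of necessary edges and `r`. -/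
def ProvidesCycle {V : Type*} (E : Set (V × V)) (r : V × V) (e : V × V) : Prop :=
  Relation.ReflTransGen (fun a b => Necessary E (a, b) ∨ (a, b) = r) e.2 e.1

/-- `w` is a cut vertex: deleting `w` disconnects the underlying undirected graph,
i.e. some two vertices distinct from `w` are joined by no undirected path avoiding `w`. -/
def IsCutVertex {V : Type*} (E : Set (V × V)) (w : V) : Prop :=
  ∃ u v : V, u ≠ w ∧ v ≠ w ∧
    ¬ Relation.ReflTransGen
        (fun a b => a ≠ w ∧ b ≠ w ∧ ((a, b) ∈ E ∨ (b, a) ∈ E)) u v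

theorem aux_mono {V : Type*} {r s : V → V → Prop} {x y : V} (h : Relation.ReflTransGen r x y)
    (hrs : ∀ a b, r a b → s a b) : Relation.ReflTransGen s x y := by
  induction h with
  | refl => exact .refl
  | tail _ hbc ih => exact ih.tail (hrs _ _ hbc)

theorem aux_path {V : Type*} {r : V → V → Prop} {x y : V} (h : Relation.ReflTransGen r x y) :
    ∃ l : List V, List.IsChain r (x :: l) ∧ (x :: l).Nodup ∧
      (x :: l).getLast (List.cons_ne_nil _ _) = y ∧ ∀ z ∈ l, ∃ p, r p z := by
  induction h using Relation.ReflTransGen.head_induction_on with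
  | refl => exact ⟨[], by simp, by simp, by simp, by simp⟩
  | @head a c hac _ ih =>
    obtain ⟨l, h1, h2, h3, h4⟩ := ih
    by_cases ha : a ∈ c :: l
    · obtain ⟨s, t, hst⟩ := List.append_of_mem ha
      have hsuf : (a :: t) <:+ (c :: l) := ⟨s, hst.symm⟩
      refine ⟨t, h1.suffix hsuf, h2.sublist hsuf.sublist, ?_, ?_⟩
      · rw [← h3]
        simp only [hst]
        rw [List.getLast_append_of_ne_nil]
      · intro z hz
        have : z ∈ c :: l := by rw [hst]; simp [hz]
        rcases List.mem_cons.1 this with rfl | hz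
        · exact ⟨a, hac⟩
        · exact h4 z hz
    · refine ⟨c :: l, ?_, ?_, ?_, ?_⟩
      · exact List.IsChain.cons_cons hac h1
      · exact List.nodup_cons.2 ⟨ha, h2⟩
      · rw [List.getLast_cons (List.cons_ne_nil _ _)]; exact h3
      · intro z hz
        rcases List.mem_cons.1 hz with rfl | hz
        · exact ⟨a, hac⟩
        · exact h4 z hz

theorem aux_zip {V : Type*} {E : Set (V × V)} (z : V) (l : List V) : ∀ (x : V),
    List.IsChain (fun a b => (a, b) ∈ E) (x :: l) →
    ((x :: l).getLast (List.cons_ne_nil _ _), z) ∈ E →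
    ∀ e ∈ (x :: l).zip (l ++ [z]), e ∈ E := by
  induction l with
  | nil => intro x _ h e he; simp at he h; subst he; exact h
  | cons y l ih =>
    intro x h1 h2 e he
    rw [List.isChain_cons_cons] at h1
    rw [List.getLast_cons (List.cons_ne_nil _ _)] at h2
    simp only [List.cons_append, List.zip_cons_cons, List.mem_cons] at he
    rcases he with rfl | he
    · exact h1.1
    · exact ih y h1.2 h2 e (by simpa using he)

theorem aux_cycle {V : Type*} {E : Set (V × V)}
    (hcyc : ∀ c : List V, IsCycle E c → c.length ≤ 3) (x : V) (l : List V)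
    (h1 : List.IsChain (fun a b => (a, b) ∈ E) (x :: l)) (h2 : (x :: l).Nodup)
    (h3 : ((x :: l).getLast (List.cons_ne_nil _ _), x) ∈ E) : l.length ≤ 2 := by
  have := hcyc (x :: l) ⟨by simp, h2, by
    intro e he
    unfold cycleEdges at he
    rw [List.rotate_cons_succ, List.rotate_zero] at he
    exact aux_zip x l x h1 h3 e he⟩
  simp only [List.length_cons] at this
  omega

theorem aux_short {V : Type*} {E S : Set (V × V)}
    (hcyc : ∀ c : List V, IsCycle E c → c.length ≤ 3) (hS : S ⊆ E) {u v : V}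
    (huv : (u, v) ∈ E) (hne : v ≠ u)
    (h : Relation.ReflTransGen (fun a b => (a, b) ∈ S) v u) :
    (v, u) ∈ S ∨ ∃ w, w ≠ u ∧ w ≠ v ∧ (v, w) ∈ S ∧ (w, u) ∈ S := by
  obtain ⟨l, h1, h2, h3, -⟩ := aux_path h
  have hl := aux_cycle hcyc v l (h1.imp (fun _ _ h => hS h)) h2 (by rw [h3]; exact huv)
  match l, h1, h2, h3, hl with
  | [], h1, h2, h3, _ => exact absurd h3 hne
  | [a], h1, h2, h3, _ => 
    simp at h1 h3; subst h3; exact Or.inl h1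
  | [a, b], h1, h2, h3, _ => 
    simp at h1 h2 h3; subst h3
    exact Or.inr ⟨a, by grind, by grind, h1.1, h1.2⟩

theorem aux_no4 {V : Type*} {E : Set (V × V)}
    (hcyc : ∀ c : List V, IsCycle E c → c.length ≤ 3) {a b c d : V}
    (h : [a, b, c, d].Nodup) (h1 : (a, b) ∈ E) (h2 : (b, c) ∈ E) (h3 : (c, d) ∈ E)
    (h4 : (d, a) ∈ E) : False := by
  have := aux_cycle hcyc a [b, c, d] (by simp [*]) h (by simpa using h4)
  simp at this

theorem aux_no5 {V : Type*} {E : Set (V × V)}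
    (hcyc : ∀ c : List V, IsCycle E c → c.length ≤ 3) {a b c d e : V}
    (h : [a, b, c, d, e].Nodup) (h1 : (a, b) ∈ E) (h2 : (b, c) ∈ E) (h3 : (c, d) ∈ E)
    (h4 : (d, e) ∈ E) (h5 : (e, a) ∈ E) : False := by
  have := aux_cycle hcyc a [b, c, d, e] (by simp [*]) h (by simpa using h5)
  simp at this

theorem aux_no6 {V : Type*} {E : Set (V × V)}
    (hcyc : ∀ c : List V, IsCycle E c → c.length ≤ 3) {a b c d e f : V}
    (h : [a, b, c, d, e, f].Nodup) (h1 : (a, b) ∈ E) (h2 : (b, c) ∈ E) (h3 : (c, d) ∈ E)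
    (h4 : (d, e) ∈ E) (h5 : (e, f) ∈ E) (h6 : (f, a) ∈ E) : False := by
  have := aux_cycle hcyc a [b, c, d, e, f] (by simp [*]) h (by simpa using h6)
  simp at this

theorem aux_split {V : Type*} {r : V → V → Prop} {x y : V} (u : V)
    (h : Relation.ReflTransGen r x y) :
    Relation.ReflTransGen (fun p q => r p q ∧ q ≠ u) x y ∨
      (Relation.ReflTransGen r x u ∧ Relation.ReflTransGen r u y) := by
  induction h with
  | refl => exact Or.inl .refl
  | @tail b c hab hbc ih =>
    rcases ih with ih | ih
    · by_cases hc : c = u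
      · subst hc; exact Or.inr ⟨hab.tail hbc, .refl⟩
      · exact Or.inl (ih.tail ⟨hbc, hc⟩)
    · exact Or.inr ⟨ih.1, ih.2.tail hbc⟩

/-- A redundant edge `(p,q)` of a triangle `p → q → s → p`. -/
theorem aux_red {V : Type*} {E : Set (V × V)}
    (hcyc : ∀ c : List V, IsCycle E c → c.length ≤ 3) {p q s : V}
    (hpq : p ≠ q) (hqs : q ≠ s) (hsp : s ≠ p)
    (h2 : (q, s) ∈ E) (h3 : (s, p) ∈ E) (hr : Redundant E (p, q)) :
    ((p, s) ∈ E ∨ ∃ a, a ≠ p ∧ a ≠ q ∧ a ≠ s ∧ (p, a) ∈ E ∧ (a, s) ∈ E) ∧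
    ((s, q) ∈ E ∨ ∃ a, a ≠ p ∧ a ≠ q ∧ a ≠ s ∧ (s, a) ∈ E ∧ (a, q) ∈ E) := by
  obtain ⟨hE, hS⟩ := hr
  rcases aux_split s (hS p q) with h | ⟨ha, hb⟩
  · exfalso
    obtain ⟨l, c1, c2, c3, c4⟩ := aux_path h
    have hs : s ∉ p :: l := by
      intro hs
      rcases List.mem_cons.1 hs with hs | hs
      · exact hsp hs
      · obtain ⟨_, h⟩ := c4 s hs
        exact h.2 rfl
    have hl := aux_cycle hcyc s (p :: l)
      (List.IsChain.cons_cons h3 (c1.imp (fun _ _ h => h.1.1))) (List.nodup_cons.2 ⟨hs, c2⟩)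
      (by rw [List.getLast_cons (List.cons_ne_nil _ _), c3]; exact h2)
    match l, c1, c3, hl with
    | [], _, c3, _ => exact hpq c3
    | [a], c1, c3, _ => simp at c1 c3; subst c3; exact c1.1.2 rfl
    | _ :: _ :: _, _, _, hl => simp at hl
  · constructor
    · rcases aux_short hcyc Set.sdiff_subset h3 hsp.symm ha with h | ⟨w, w1, w2, w3, w4⟩
      · exact Or.inl h.1
      · refine Or.inr ⟨w, w2, ?_, w1, w3.1, w4.1⟩
        rintro rfl; exact w3.2 rfl
    · rcases aux_short hcyc Set.sdiff_subset h2 hqs.symm hb with h | ⟨w, w1, w2, w3, w4⟩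
      · exact Or.inl h.1
      · refine Or.inr ⟨w, ?_, w1, w2, w3.1, w4.1⟩
        rintro rfl; exact w4.2 rfl

theorem aux_bitri {V : Type*} {E : Set (V × V)}
    (hcyc : ∀ c : List V, IsCycle E c → c.length ≤ 3) {p q s : V}
    (hpq : p ≠ q) (hqs : q ≠ s) (hsp : s ≠ p)
    (h2 : (q, s) ∈ E) (h3 : (s, p) ∈ E) (hr : Redundant E (p, q)) (hr' : Redundant E (q, s)) :
    (p, s) ∈ E ∧ (s, q) ∈ E ∧ (q, p) ∈ E := by
  obtain ⟨A, B⟩ := aux_red hcyc hpq hqs hsp h2 h3 hr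
  obtain ⟨C, -⟩ := aux_red hcyc hqs hsp hpq h3 hr.1 hr'
  have h1 := hr.1
  rcases A with A | ⟨a, a1, a2, a3, a4, a5⟩ <;> rcases B with B | ⟨b, b1, b2, b3, b4, b5⟩ <;>
    rcases C with C | ⟨c, c1, c2, c3, c4, c5⟩
  · exact ⟨A, B, C⟩
  · exact (aux_no4 hcyc (a := p) (b := s) (c := q) (d := c) (by simp; grind) A B c4 c5).elim
  · exact (aux_no4 hcyc (a := p) (b := s) (c := b) (d := q) (by simp; grind) A b4 b5 C).elim
  · by_cases hbc : b = c
    · subst hbc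
      exact (aux_no4 hcyc (a := s) (b := b) (c := p) (d := q) (by simp; grind) b4 c5 h1 h2).elim
    · exact (aux_no5 hcyc (a := p) (b := s) (c := b) (d := q) (e := c) (by simp; grind)
        A b4 b5 c4 c5).elim
  · exact (aux_no4 hcyc (a := p) (b := a) (c := s) (d := q) (by simp; grind) a4 a5 B C).elim
  · by_cases hac : a = c
    · subst hac
      exact (aux_no4 hcyc (a := q) (b := a) (c := s) (d := p) (by simp; grind) c4 a5 h3 h1).elim
    · exact (aux_no5 hcyc (a := p) (b := a) (c := s) (d := q) (e := c) (by simp; grind)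
        a4 a5 B c4 c5).elim
  · by_cases hab : a = b
    · subst hab
      exact (aux_no4 hcyc (a := p) (b := a) (c := q) (d := s) (by simp; grind) a4 b5 h2 h3).elim
    · exact (aux_no5 hcyc (a := p) (b := a) (c := s) (d := b) (e := q) (by simp; grind)
        a4 a5 b4 b5 C).elim
  · by_cases hab : a = b
    · subst hab
      exact (aux_no4 hcyc (a := p) (b := a) (c := q) (d := s) (by simp; grind) a4 b5 h2 h3).elim
    by_cases hac : a = c
    · subst hac
      exact (aux_no4 hcyc (a := q) (b := a) (c := s) (d := p) (by simp; grind) c4 a5 h3 h1).elim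
    by_cases hbc : b = c
    · subst hbc
      exact (aux_no4 hcyc (a := s) (b := b) (c := p) (d := q) (by simp; grind) b4 c5 h1 h2).elim
    exact (aux_no6 hcyc (a := p) (b := a) (c := s) (d := b) (e := q) (f := c) (by simp; grind)
        a4 a5 b4 b5 c4 c5).elim

/-- `x` is reached from `a` through vertices outside `T`. -/
def AuxOut {V : Type*} (E : Set (V × V)) (T : Set V) (a x : V) : Prop :=
  ∃ y, y ∉ T ∧ (a, y) ∈ E ∧ Relation.ReflTransGen (fun p q => (p, q) ∈ E ∧ p ∉ T ∧ q ∉ T) y x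

/-- `x` reaches `b` through vertices outside `T`. -/
def AuxIn {V : Type*} (E : Set (V × V)) (T : Set V) (b x : V) : Prop :=
  ∃ z, z ∉ T ∧ (z, b) ∈ E ∧ Relation.ReflTransGen (fun p q => (p, q) ∈ E ∧ p ∉ T ∧ q ∉ T) x z

theorem aux_out_exists {V : Type*} {E : Set (V × V)} {T : Set V} {a x : V} (ha : a ∈ T)
    (h : Relation.ReflTransGen (fun p q => (p, q) ∈ E) a x) :
    x ∉ T → ∃ b ∈ T, AuxOut E T b x := by
  induction h with
  | refl => exact fun h => absurd ha h
  | @tail b c _ hbc ih =>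
    intro hc
    by_cases hb : b ∈ T
    · exact ⟨b, hb, c, hc, hbc, .refl⟩
    · obtain ⟨d, hd, y, h1, h2, h3⟩ := ih hb
      exact ⟨d, hd, y, h1, h2, h3.tail ⟨hbc, hb, hc⟩⟩

theorem aux_in_exists {V : Type*} {E : Set (V × V)} {T : Set V} {a x : V} (ha : a ∈ T)
    (h : Relation.ReflTransGen (fun p q => (p, q) ∈ E) x a) :
    x ∉ T → ∃ b ∈ T, AuxIn E T b x := by
  induction h using Relation.ReflTransGen.head_induction_on with
  | refl => exact fun h => absurd ha h
  | @head c b hcb _ ih =>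
    intro hc
    by_cases hb : b ∈ T
    · exact ⟨b, hb, c, hc, hcb, .refl⟩
    · obtain ⟨d, hd, z, h1, h2, h3⟩ := ih hb
      exact ⟨d, hd, z, h1, h2, h3.head ⟨hcb, hc, hb⟩⟩

theorem aux_noear {V : Type*} {E : Set (V × V)} {T : Set V}
    (hcyc : ∀ c : List V, IsCycle E c → c.length ≤ 3)
    (hT : ∀ a ∈ T, ∀ b ∈ T, a ≠ b → ∃ c ∈ T, c ≠ a ∧ c ≠ b ∧ (b, c) ∈ E ∧ (c, a) ∈ E)
    {a b x : V} (ha : a ∈ T) (hb : b ∈ T) (ho : AuxOut E T a x) (hi : AuxIn E T b x) :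
    a = b := by
  by_contra hab
  obtain ⟨c, hc, hca, hcb, h1, h2⟩ := hT a ha b hb hab
  obtain ⟨y, y1, y2, y3⟩ := ho
  obtain ⟨z, z1, z2, z3⟩ := hi
  obtain ⟨l, c1, c2, c3, c4⟩ := aux_path (y3.trans z3)
  have hl : ∀ t ∈ T, t ∉ y :: l := by
    intro t ht hm
    rcases List.mem_cons.1 hm with rfl | hm
    · exact y1 ht
    · obtain ⟨_, h⟩ := c4 t hm
      exact h.2.2 ht
  have := aux_cycle hcyc b (c :: a :: y :: l)
    (.cons_cons h1 (.cons_cons h2 (.cons_cons y2 (c1.imp (fun _ _ h => h.1)))))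
    (by
      have e1 := hl a ha
      have e2 := hl b hb
      have e3 := hl c hc
      rw [List.nodup_cons, List.nodup_cons, List.nodup_cons]
      refine ⟨?_, ?_, e1, c2⟩ <;> grind)
    (by simpa [List.getLast_cons, c3] using z2)
  simp at this

theorem aux_nobitri {V : Type*} [Fintype V] {E : Set (V × V)}
    (hconn : StronglyConnects E)
    (hcyc : ∀ c : List V, IsCycle E c → c.length ≤ 3)
    (hcard : 4 ≤ Fintype.card V)
    (hcut : ∀ w : V, ¬ IsCutVertex E w) {T : Set V} (hT3 : T.ncard ≤ 3) {p q : V}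
    (hp : p ∈ T) (hq : q ∈ T) (hpq : p ≠ q)
    (hT : ∀ a ∈ T, ∀ b ∈ T, a ≠ b → ∃ c ∈ T, c ≠ a ∧ c ≠ b ∧ (b, c) ∈ E ∧ (c, a) ∈ E) :
    False := by
  have hx : ∃ x, x ∉ T := by
    by_contra! h
    have : T = Set.univ := Set.eq_univ_of_forall h
    rw [this, Set.ncard_univ, Nat.card_eq_fintype_card] at hT3
    omega
  obtain ⟨x, hx⟩ := hx
  obtain ⟨a, ha, hao⟩ := aux_out_exists hp (hconn p x) hx
  obtain ⟨b, hb, hbT⟩ : ∃ b, b ≠ a ∧ b ∈ T := by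
    by_cases h : p = a
    · exact ⟨q, by grind, hq⟩
    · exact ⟨p, h, hp⟩
  apply hcut a
  refine ⟨x, b, by grind, hb, fun h => ?_⟩
  have key : b ∉ T ∧ AuxOut E T a b := by
    clear hbT hb
    induction h with
    | refl => exact ⟨hx, hao⟩
    | @tail y z _ hyz ih =>
      obtain ⟨hy, hyo⟩ := ih
      obtain ⟨-, hza, hyz⟩ := hyz
      rcases hyz with hyz | hzy
      · have hz : z ∉ T := fun hz =>
          hza (aux_noear hcyc hT ha hz hyo ⟨y, hy, hyz, .refl⟩).symm
        obtain ⟨y', h1, h2, h3⟩ := hyo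
        exact ⟨hz, y', h1, h2, h3.tail ⟨hyz, hy, hz⟩⟩
      · obtain ⟨b', hb', hbi⟩ := aux_in_exists hp (hconn y p) hy
        obtain rfl := aux_noear hcyc hT ha hb' hyo hbi
        have hz : z ∉ T := fun hz =>
          hza (aux_noear hcyc hT hz ha ⟨y, hy, hzy, .refl⟩ hbi)
        obtain ⟨c, hc, hco⟩ := aux_out_exists hp (hconn p z) hz
        obtain ⟨w, w1, w2, w3⟩ := hbi
        obtain rfl := aux_noear hcyc hT hc ha hco ⟨w, w1, w2, w3.head ⟨hzy, hz, hy⟩⟩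
        exact ⟨hz, hco⟩
  exact key.1 hbT

theorem aux_tri {V : Type*} [Fintype V] {E : Set (V × V)}
    (hconn : StronglyConnects E)
    (hcyc : ∀ c : List V, IsCycle E c → c.length ≤ 3)
    (hcard : 4 ≤ Fintype.card V)
    (hcut : ∀ w : V, ¬ IsCutVertex E w) {p q s : V}
    (hpq : p ≠ q) (hqs : q ≠ s) (hsp : s ≠ p) (h3 : (s, p) ∈ E)
    (hr : Redundant E (p, q)) (hr' : Redundant E (q, s)) : False := by
  obtain ⟨A, B, C⟩ := aux_bitri hcyc hpq hqs hsp hr'.1 h3 hr hr'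
  have h1 := hr.1
  have h2 := hr'.1
  refine aux_nobitri hconn hcyc hcard hcut (T := {p, q, s}) (p := p) (q := q) ?_
    (by simp) (by simp) hpq ?_
  · classical
    have := Finset.card_le_three (a := p) (b := q) (c := s)
    rw [← Set.ncard_coe_finset] at this
    simpa using this
  · intro a ha b hb hab
    simp only [Set.mem_insert_iff, Set.mem_singleton_iff] at ha hb ⊢
    rcases ha with rfl | rfl | rfl <;> rcases hb with rfl | rfl | rfl <;>
      first
      | exact absurd rfl hab
      | exact ⟨a, by grind, by grind, by grind, by assumption, by assumption⟩
      | exact ⟨b, by grind, by grind, by grind, by assumption, by assumption⟩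
      | exact ⟨p, by grind, by grind, by grind, by assumption, by assumption⟩
      | exact ⟨q, by grind, by grind, by grind, by assumption, by assumption⟩
      | exact ⟨s, by grind, by grind, by grind, by assumption, by assumption⟩

theorem aux_forward {V : Type*} [Fintype V] {E : Set (V × V)}
    (hconn : StronglyConnects E)
    (hcyc : ∀ c : List V, IsCycle E c → c.length ≤ 3)
    (hcard : 4 ≤ Fintype.card V)
    (hcut : ∀ w : V, ¬ IsCutVertex E w) {S : Set (V × V)} (hSE : S ⊆ E)
    (hS : StronglyConnects S) (e : V × V) (he : Unsatisfied E e) :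
    ∃ r ∈ S \ necessarySet E, ProvidesCycle E r e := by
  obtain ⟨u, v⟩ := e
  obtain ⟨huv, hun⟩ := he
  simp only at hun
  have hne : v ≠ u := by rintro rfl; exact hun .refl
  rcases aux_short hcyc hSE huv hne (hS v u) with h | ⟨w, w1, w2, h1, h2⟩
  · by_cases hn : Necessary E (v, u)
    · exact absurd (.single hn) hun
    · exact ⟨(v, u), ⟨h, hn⟩, .single (Or.inr rfl)⟩
  · by_cases n1 : Necessary E (v, w) <;> by_cases n2 : Necessary E (w, u)
    · exact absurd (.head n1 (.single n2)) hun
    · exact ⟨(w, u), ⟨h2, n2⟩, .head (Or.inl n1) (.single (Or.inr rfl))⟩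
    · exact ⟨(v, w), ⟨h1, n1⟩, .head (Or.inr rfl) (.single (Or.inl n2))⟩
    · have r1 : Redundant E (v, w) := ⟨hSE h1, by by_contra h; exact n1 ⟨hSE h1, h⟩⟩
      have r2 : Redundant E (w, u) := ⟨hSE h2, by by_contra h; exact n2 ⟨hSE h2, h⟩⟩
      exact (aux_tri hconn hcyc hcard hcut w2.symm w1 hne.symm huv r1 r2).elim

theorem aux_nec_sub {V : Type*} {E S : Set (V × V)} (hSE : S ⊆ E) (hS : StronglyConnects S) :
    necessarySet E ⊆ S := by
  intro e he
  by_contra hn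
  apply he.2
  intro u v
  refine aux_mono (hS u v) ?_
  intro a b hab
  refine ⟨hSE hab, ?_⟩
  rintro rfl
  exact hn hab

theorem aux_backward {V : Type*} {E R : Set (V × V)} (hconn : StronglyConnects E)
    (hR : ∀ e : V × V, Unsatisfied E e → ∃ r ∈ R, ProvidesCycle E r e) :
    StronglyConnects (necessarySet E ∪ R) := by
  intro u v
  induction hconn v u with
  | refl => exact .refl
  | @tail b c _ hbc ih =>
    refine Relation.ReflTransGen.trans ?_ ih
    by_cases h : Relation.ReflTransGen (fun a b => Necessary E (a, b)) c b
    · exact aux_mono h (fun _ _ h => Or.inl h)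
    · obtain ⟨r, hr, hp⟩ := hR (b, c) ⟨hbc, h⟩
      refine aux_mono hp ?_
      rintro x y (h | rfl)
      · exact Or.inl h
      · exact Or.inr hr

/-- The minimum size of a strongly connecting subset of `E` equals
the number of necessary edges plus the minimum size of a set of redundant edges
providing a cycle for every unsatisfied edge. -/
theorem scss_min_eq {V : Type*} [Fintype V] (E : Set (V × V))
    (hconn : StronglyConnects E)
    (hcyc : ∀ c : List V, IsCycle E c → c.length ≤ 3)
    (hcard : 4 ≤ Fintype.card V)
    (hcut : ∀ w : V, ¬ IsCutVertex E w) :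
    sInf {n : ℕ | ∃ S : Set (V × V), S ⊆ E ∧ StronglyConnects S ∧ S.ncard = n} =
      (necessarySet E).ncard +
        sInf {n : ℕ | ∃ R : Set (V × V), (∀ r ∈ R, Redundant E r) ∧
          (∀ e : V × V, Unsatisfied E e → ∃ r ∈ R, ProvidesCycle E r e) ∧
          R.ncard = n} := by
  have hfin : ∀ A : Set (V × V), A.Finite := fun A => Set.toFinite A
  have fwd : ∀ S : Set (V × V), S ⊆ E → StronglyConnects S →
      ∃ R : Set (V × V), (∀ r ∈ R, Redundant E r) ∧
        (∀ e : V × V, Unsatisfied E e → ∃ r ∈ R, ProvidesCycle E r e) ∧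
        (necessarySet E).ncard + R.ncard = S.ncard := by
    intro S hSE hS
    refine ⟨S \ necessarySet E, ?_, aux_forward hconn hcyc hcard hcut hSE hS, ?_⟩
    · intro r hr
      refine ⟨hSE hr.1, ?_⟩
      by_contra h
      exact hr.2 ⟨hSE hr.1, h⟩
    · rw [add_comm]
      exact Set.ncard_sdiff_add_ncard_of_subset (aux_nec_sub hSE hS) (hfin _)
  apply le_antisymm
  · obtain ⟨R0, h01, h02, -⟩ := fwd E subset_rfl hconn
    obtain ⟨R, h1, h2, h3⟩ := Nat.sInf_mem (s := {n : ℕ | ∃ R : Set (V × V),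
      (∀ r ∈ R, Redundant E r) ∧
          (∀ e : V × V, Unsatisfied E e → ∃ r ∈ R, ProvidesCycle E r e) ∧
          R.ncard = n}) ⟨_, R0, h01, h02, rfl⟩
    rw [← h3]
    refine le_trans ?_ (Set.ncard_union_le _ _)
    apply Nat.sInf_le
    refine ⟨necessarySet E ∪ R, ?_, aux_backward hconn h2, rfl⟩
    rintro e (he | he)
    · exact he.1
    · exact (h1 e he).1
  · obtain ⟨S, h1, h2, h3⟩ := Nat.sInf_mem (s := {n : ℕ | ∃ S : Set (V × V),
      S ⊆ E ∧ StronglyConnects S ∧ S.ncard = n}) ⟨_, E, subset_rfl, hconn, rfl⟩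
    rw [← h3]
    obtain ⟨R, r1, r2, r3⟩ := fwd S h1 h2
    rw [← r3]
    apply Nat.add_le_add_left
    apply Nat.sInf_le
    exact ⟨R, r1, r2, rfl⟩
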